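/- Let λ ≥ 1, 0 < σ < 1/2 and 2σ < α ≤ 1. Suppose u ∈ C^α_+ (with u ∈ Lip_+ when α = 1) and ∫₀^∞ |u(y)|/(1+y)^{1+2σ} dy < ∞. Then for every x > 0: the integral ∫₀^∞ (u(x) − u(y)) K_σ^λ(x,y) dy converges absolutely, the integral ∫₀^∞ (W_t^λ u(x) − u(x)) t^{−1−σ} dt converges absolutely, and (1/Γ(−σ)) ∫₀^∞ (W_t^λ u(x) − u(x)) t^{−1−σ} dt = ∫₀^∞ (u(x) − u(y)) K_σ^λ(x,y) dy + u(x) B_σ^λ(x). Moreover, the right-hand side is a continuous function of x on ℝ₊. -/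

import Mathlib

open Real MeasureTheory Set Filter

noncomputable section

/-- The modified Bessel function of the first kind `I_ν(z)`. -/
def besselI (ν z : ℝ) : ℝ :=
  ∑' k : ℕ, (z / 2) ^ (2 * (k : ℝ) + ν) / ((Nat.factorial k : ℝ) * Real.Gamma ((k : ℝ) + ν + 1))

/-- The Bessel heat kernel `W_t^λ(x,y)`. -/
def besselHeatKernel (lam t x y : ℝ) : ℝ :=
  Real.sqrt (x * y) / (2 * t) * besselI (lam - 1 / 2) (x * y / (2 * t)) *
    Real.exp (-(x ^ 2 + y ^ 2) / (4 * t))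

/-- The Bessel–Poisson kernel `P_t^λ(x,y)`, obtained by subordination. -/
def besselPoissonKernel (lam t x y : ℝ) : ℝ :=
  t / (2 * Real.sqrt Real.pi) *
    ∫ s in Set.Ioi (0 : ℝ),
      s ^ (-(3 : ℝ) / 2) * Real.exp (-t ^ 2 / (4 * s)) * besselHeatKernel lam s x y

/-- The Bessel heat semigroup `W_t^λ u (x)`. -/
def heatSemigroup (lam : ℝ) (u : ℝ → ℝ) (t x : ℝ) : ℝ :=
  ∫ y in Set.Ioi (0 : ℝ), besselHeatKernel lam t x y * u y

/-- The Bessel–Poisson semigroup `P_t^λ f (x)`. -/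
def poissonSemigroup (lam : ℝ) (f : ℝ → ℝ) (t x : ℝ) : ℝ :=
  ∫ y in Set.Ioi (0 : ℝ), besselPoissonKernel lam t x y * f y

/-- The set of Hölder quotients of `f` on `(0,∞)`. -/
def holderRatioSet (α : ℝ) (f : ℝ → ℝ) : Set ℝ :=
  {r | ∃ x y : ℝ, 0 < x ∧ 0 < y ∧ x ≠ y ∧ r = |f x - f y| / |x - y| ^ α}

/-- The set of growth quotients `|f x|/x^α` of `f` on `(0,∞)`. -/
def growthRatioSet (α : ℝ) (f : ℝ → ℝ) : Set ℝ :=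
  {r | ∃ x : ℝ, 0 < x ∧ r = |f x| / x ^ α}

/-- Membership in the Hölder space `C^α_+` (equal to `Lip_+` when `α = 1`). -/
def MemHolderPlus (α : ℝ) (f : ℝ → ℝ) : Prop :=
  ContinuousOn f (Set.Ioi 0) ∧ BddAbove (holderRatioSet α f) ∧ BddAbove (growthRatioSet α f)

/-- The `C^α_+` norm. -/
def holderPlusNorm (α : ℝ) (f : ℝ → ℝ) : ℝ :=
  sSup (holderRatioSet α f) + sSup (growthRatioSet α f)

/-- `Γ(-σ)`, written through the functional equation `Γ(-σ) = Γ(2-σ)/((-σ)(1-σ))`. -/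
def gammaNeg (σ : ℝ) : ℝ := Real.Gamma (2 - σ) / (-σ * (1 - σ))

/-- The kernel `K_σ^λ(x,y)`. -/
def fracKernelK (lam σ x y : ℝ) : ℝ :=
  1 / (-gammaNeg σ) * ∫ t in Set.Ioi (0 : ℝ), besselHeatKernel lam t x y * t ^ (-1 - σ)

/-- `W_t^λ 1 (x)`. -/
def heatOne (lam t x : ℝ) : ℝ := ∫ y in Set.Ioi (0 : ℝ), besselHeatKernel lam t x y

/-- The function `B_σ^λ(x)`. -/
def fracFunB (lam σ x : ℝ) : ℝ :=
  1 / gammaNeg σ * ∫ t in Set.Ioi (0 : ℝ), (heatOne lam t x - 1) * t ^ (-1 - σ)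

/-- The integer `m` with `m - 1 ≤ β < m`. -/
def fracOrder (β : ℝ) : ℕ := Nat.floor β + 1

/-- The Segovia–Wheeden fractional derivative `∂_t^β F(t)`, a complex number. -/
def fracDeriv (β : ℝ) (F : ℝ → ℝ) (t : ℝ) : ℂ :=
  Complex.exp (-(Real.pi * ((fracOrder β : ℝ) - β)) * Complex.I) /
      Complex.ofReal (Real.Gamma ((fracOrder β : ℝ) - β)) *
    Complex.ofReal
      (∫ s in Set.Ioi (0 : ℝ),
        iteratedDeriv (fracOrder β) F (t + s) * s ^ ((fracOrder β : ℝ) - β - 1))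

/-- The real beta integral in terms of the Gamma function. -/
lemma integral_rpow_mul_one_sub_rpow {p q : ℝ} (hp : 0 < p) (hq : 0 < q) :
    ∫ w in (0 : ℝ)..1, w ^ (p - 1) * (1 - w) ^ (q - 1) =
      Real.Gamma p * Real.Gamma q / Real.Gamma (p + q) := by
  have h := ProbabilityTheory.beta_eq_betaIntegralReal p q hp hq
  rw [ProbabilityTheory.beta] at h
  rw [h, Complex.betaIntegral, ← Complex.ofReal_re (∫ w in (0 : ℝ)..1, _),
    ← intervalIntegral.integral_ofReal]
  congr 1
  refine intervalIntegral.integral_congr fun w hw => ?_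
  rw [uIcc_of_le zero_le_one] at hw
  push_cast
  rw [Complex.ofReal_cpow hw.1, Complex.ofReal_cpow (sub_nonneg.2 hw.2)]
  push_cast
  rfl

/-- The even moments of the weight `(1 - t²)^a` on `(0,1)`. -/
lemma integral_pow_mul_one_sub_sq_rpow (k : ℕ) {a : ℝ} (ha : 0 ≤ a) :
    ∫ t in (0 : ℝ)..1, t ^ (2 * k) * (1 - t ^ 2) ^ a =
      Real.Gamma (k + 1 / 2) * Real.Gamma (a + 1) / (2 * Real.Gamma (k + a + 3 / 2)) := by
  have hb := integral_rpow_mul_one_sub_rpow (p := k + 1 / 2) (q := a + 1) (by positivity)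
    (by positivity)
  have hc := integral_comp_rpow_Ioi_of_pos
    (g := (Ioo (0 : ℝ) 1).indicator fun w => w ^ ((k + 1 / 2 : ℝ) - 1) * (1 - w) ^ (a + 1 - 1))
    (p := 2) two_pos
  rw [setIntegral_indicator measurableSet_Ioo,
    inter_eq_self_of_subset_right Ioo_subset_Ioi_self, ← integral_Ioc_eq_integral_Ioo,
    ← intervalIntegral.integral_of_le zero_le_one, hb] at hc
  have he : ∫ t in (0 : ℝ)..1, t ^ (2 * k) * (1 - t ^ 2) ^ a =
      1 / 2 * ∫ x in Ioi (0 : ℝ), ((2 : ℝ) * x ^ ((2 : ℝ) - 1)) •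
        (Ioo (0 : ℝ) 1).indicator
          (fun w => w ^ ((k + 1 / 2 : ℝ) - 1) * (1 - w) ^ (a + 1 - 1)) (x ^ (2 : ℝ)) := by
    rw [intervalIntegral.integral_of_le zero_le_one, integral_Ioc_eq_integral_Ioo,
      ← integral_const_mul]
    nth_rewrite 1 [← inter_eq_self_of_subset_right (Ioo_subset_Ioi_self : Ioo (0 : ℝ) 1 ⊆ Ioi 0)]
    rw [← setIntegral_indicator measurableSet_Ioo]
    refine setIntegral_congr_fun measurableSet_Ioi fun x hx => ?_
    have hx0 : (0 : ℝ) < x := hx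
    by_cases h1 : x < 1
    · have hm : x ^ (2 : ℝ) ∈ Ioo (0 : ℝ) 1 :=
        ⟨by positivity, Real.rpow_lt_one hx0.le h1 two_pos⟩
      have hm' : x ∈ Ioo (0 : ℝ) 1 := ⟨hx0, h1⟩
      simp only [indicator_of_mem hm, indicator_of_mem hm', smul_eq_mul]
      have e1 : x ^ (2 * k) = x ^ ((2 : ℝ) - 1) * (x ^ (2 : ℝ)) ^ ((k + 1 / 2 : ℝ) - 1) := by
        rw [← Real.rpow_mul hx0.le, ← Real.rpow_add hx0, ← Real.rpow_natCast]
        congr 1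
        push_cast
        ring
      rw [e1, Real.rpow_two, add_sub_cancel_right]
      ring
    · have hm : x ^ (2 : ℝ) ∉ Ioo (0 : ℝ) 1 := fun h =>
        absurd h.2 (not_lt.2 (Real.one_le_rpow (not_lt.1 h1) zero_le_two))
      have hm' : x ∉ Ioo (0 : ℝ) 1 := fun h => h1 h.2
      simp only [indicator_of_notMem hm, indicator_of_notMem hm', smul_zero, mul_zero]
  rw [he, hc, show (k + 1 / 2 + (a + 1) : ℝ) = k + a + 3 / 2 by ring]
  ring

/-- Expansion of the Poisson integral of `I_ν` in powers of `z`. -/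
lemma hasSum_integral_cosh_mul_one_sub_sq_rpow (z : ℝ) {a : ℝ} (ha : 0 ≤ a) :
    HasSum (fun k : ℕ => z ^ (2 * k) / ((2 * k).factorial : ℝ) *
      (Real.Gamma (k + 1 / 2) * Real.Gamma (a + 1) / (2 * Real.Gamma (k + a + 3 / 2))))
      (∫ t in (0 : ℝ)..1, Real.cosh (z * t) * (1 - t ^ 2) ^ a) := by
  have hcont : Continuous fun t : ℝ => (1 - t ^ 2) ^ a :=
    Continuous.rpow_const (by fun_prop) fun _ => Or.inr ha
  have h := intervalIntegral.hasSum_integral_of_dominated_convergence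
    (μ := volume) (a := (0 : ℝ)) (b := 1)
    (F := fun (k : ℕ) (t : ℝ) => (z * t) ^ (2 * k) / ((2 * k).factorial : ℝ) * (1 - t ^ 2) ^ a)
    (f := fun t => Real.cosh (z * t) * (1 - t ^ 2) ^ a)
    (fun (k : ℕ) (_ : ℝ) => |z| ^ (2 * k) / ((2 * k).factorial : ℝ))
    (fun k => (Continuous.mul (by fun_prop) hcont).aestronglyMeasurable)
    (fun k => Eventually.of_forall fun t ht => ?_)
    (Eventually.of_forall fun t _ => (Real.hasSum_cosh |z|).summable)
    (by simp)
    (Eventually.of_forall fun t _ => (Real.hasSum_cosh (z * t)).mul_right _)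
  · refine Eq.mp (congrArg (HasSum · _) (funext fun k => ?_)) h
    rw [← integral_pow_mul_one_sub_sq_rpow k ha, ← intervalIntegral.integral_const_mul]
    congr 1
    ext t
    rw [mul_pow]
    ring
  · rw [uIoc_of_le zero_le_one] at ht
    have h1 : t ^ 2 ≤ 1 := pow_le_one₀ ht.1.le ht.2
    rw [norm_mul, norm_div, norm_pow, Real.norm_natCast, norm_mul, Real.norm_eq_abs,
      Real.norm_eq_abs, Real.norm_eq_abs, abs_of_pos ht.1,
      abs_of_nonneg (Real.rpow_nonneg (by linarith) a)]
    calc _ ≤ (|z| * 1) ^ (2 * k) / ((2 * k).factorial : ℝ) * 1 := by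
          gcongr
          · have := ht.1; positivity
          · exact ht.2
          · exact Real.rpow_le_one (by linarith) (by nlinarith [sq_nonneg t]) ha
      _ = _ := by simp

/-- Poisson's integral representation of `I_ν` with `ν = lam - 1/2`. -/
lemma besselI_eq_integral {lam z : ℝ} (hlam : 1 ≤ lam) (hz : 0 < z) :
    besselI (lam - 1 / 2) z = (z / 2) ^ (lam - 1 / 2) * (2 / (√π * Real.Gamma lam)) *
      ∫ t in (0 : ℝ)..1, Real.cosh (z * t) * (1 - t ^ 2) ^ (lam - 1) := by
  have h := (hasSum_integral_cosh_mul_one_sub_sq_rpow z (sub_nonneg.2 hlam)).mul_left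
    ((z / 2) ^ (lam - 1 / 2) * (2 / (√π * Real.Gamma lam)))
  rw [← h.tsum_eq, besselI]
  congr 1
  ext k
  have hG : 0 < Real.Gamma lam := Real.Gamma_pos_of_pos (by linarith)
  have hG2 : 0 < Real.Gamma (k + lam + 1 / 2) := Real.Gamma_pos_of_pos (by positivity)
  have hpi : 0 < √π := Real.sqrt_pos.2 Real.pi_pos
  have hdf : ((2 * k).factorial : ℝ) = 2 ^ k * k.factorial * ((2 * k - 1).doubleFactorial : ℝ) := by
    rcases k with _ | n
    · simp
    · have h1 := Nat.factorial_eq_mul_doubleFactorial (2 * n + 1)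
      rw [show 2 * n + 1 + 1 = 2 * (n + 1) by ring, Nat.doubleFactorial_two_mul] at h1
      rw [h1]
      push_cast
      rfl
  rw [Real.rpow_add (by positivity), Real.Gamma_nat_add_half, sub_add_cancel,
    show (k + (lam - 1) + 3 / 2 : ℝ) = k + lam + 1 / 2 by ring,
    show (k + (lam - 1 / 2) + 1 : ℝ) = k + lam + 1 / 2 by ring, hdf]
  have e : (z / 2) ^ (2 * (k : ℝ)) = z ^ (2 * k) / (2 ^ k * 2 ^ k) := by
    rw [← Nat.cast_two, ← Nat.cast_mul, Real.rpow_natCast, div_pow, Nat.cast_two, ← pow_add, two_mul]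
  have hd : (0 : ℝ) < (2 * k - 1).doubleFactorial := by exact_mod_cast Nat.doubleFactorial_pos _
  rw [e]
  field_simp

/-- The bounded factor `√z e^{-z} I_ν(z)` of the Bessel heat kernel. -/
def besselProfile (lam z : ℝ) : ℝ := √z * Real.exp (-z) * besselI (lam - 1 / 2) z

lemma besselProfile_eq_integral {lam z : ℝ} (hlam : 1 ≤ lam) (hz : 0 < z) :
    besselProfile lam z = 1 / (2 ^ (lam - 1 / 2) * √π * Real.Gamma lam) * (z ^ lam *
      ∫ s in (0 : ℝ)..2, Real.exp (-(z * s)) * (s * (2 - s)) ^ (lam - 1)) := by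
  have hc : Continuous fun s : ℝ => (s * (2 - s)) ^ (lam - 1) :=
    Continuous.rpow_const (by fun_prop) fun _ => Or.inr (sub_nonneg.2 hlam)
  have hi : ∀ p q : ℝ, IntervalIntegrable
      (fun s => Real.exp (-(z * s)) * (s * (2 - s)) ^ (lam - 1)) volume p q := fun p q =>
    (Continuous.mul (by fun_prop) hc).intervalIntegrable _ _
  have hi' : IntervalIntegrable
      (fun s => Real.exp (-(z * (2 - s))) * (s * (2 - s)) ^ (lam - 1)) volume 0 1 :=
    (Continuous.mul (by fun_prop) hc).intervalIntegrable _ _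
  have h1 : ∫ t in (0 : ℝ)..1, Real.cosh (z * t) * (1 - t ^ 2) ^ (lam - 1) =
      ∫ s in (0 : ℝ)..1, Real.cosh (z * (1 - s)) * (s * (2 - s)) ^ (lam - 1) := by
    have := intervalIntegral.integral_comp_sub_left (a := 0) (b := 1)
      (fun t => Real.cosh (z * t) * (1 - t ^ 2) ^ (lam - 1)) 1
    rw [sub_zero, sub_self] at this
    rw [← this]
    congr 1
    ext s
    congr 2
    ring
  have h2 : ∫ s in (1 : ℝ)..2, Real.exp (-(z * s)) * (s * (2 - s)) ^ (lam - 1) =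
      ∫ s in (0 : ℝ)..1, Real.exp (-(z * (2 - s))) * (s * (2 - s)) ^ (lam - 1) := by
    have := intervalIntegral.integral_comp_sub_left (a := 0) (b := 1)
      (fun s => Real.exp (-(z * s)) * (s * (2 - s)) ^ (lam - 1)) 2
    rw [sub_zero, show (2 - 1 : ℝ) = 1 by norm_num] at this
    rw [← this]
    congr 1
    ext s
    congr 2
    ring
  rw [← intervalIntegral.integral_add_adjacent_intervals (hi 0 1) (hi 1 2), h2,
    ← intervalIntegral.integral_add (hi 0 1) hi']
  have h3 : ∀ s : ℝ, Real.exp (-(z * s)) * (s * (2 - s)) ^ (lam - 1) +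
      Real.exp (-(z * (2 - s))) * (s * (2 - s)) ^ (lam - 1) =
      2 * Real.exp (-z) * (Real.cosh (z * (1 - s)) * (s * (2 - s)) ^ (lam - 1)) := by
    intro s
    rw [Real.cosh_eq, show -(z * s) = -z + z * (1 - s) by ring,
      show -(z * (2 - s)) = -z + -(z * (1 - s)) by ring, Real.exp_add, Real.exp_add]
    ring
  simp_rw [h3]
  rw [intervalIntegral.integral_const_mul, besselProfile, besselI_eq_integral hlam hz, h1,
    Real.div_rpow hz.le zero_le_two, show z ^ lam = √z * z ^ (lam - 1 / 2) by
      rw [Real.sqrt_eq_rpow, ← Real.rpow_add hz]; congr 1; ring]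
  have hG : 0 < Real.Gamma lam := Real.Gamma_pos_of_pos (by linarith)
  have hpi : 0 < √π := Real.sqrt_pos.2 Real.pi_pos
  field_simp

lemma continuous_rpow_mul_integral_exp {lam : ℝ} (hlam : 1 ≤ lam) : Continuous fun z : ℝ =>
    1 / (2 ^ (lam - 1 / 2) * √π * Real.Gamma lam) * (z ^ lam *
      ∫ s in (0 : ℝ)..2, Real.exp (-(z * s)) * (s * (2 - s)) ^ (lam - 1)) := by
  have hc : Continuous fun s : ℝ => (s * (2 - s)) ^ (lam - 1) :=
    Continuous.rpow_const (by fun_prop) fun _ => Or.inr (sub_nonneg.2 hlam)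
  refine continuous_const.mul ((continuous_id.rpow_const fun _ => Or.inr (by linarith)).mul
    (intervalIntegral.continuous_parametric_intervalIntegral_of_continuous' ?_ 0 2))
  exact Continuous.mul (by fun_prop) (hc.comp continuous_snd)

lemma continuousOn_besselProfile {lam : ℝ} (hlam : 1 ≤ lam) :
    ContinuousOn (besselProfile lam) (Ioi 0) :=
  (continuous_rpow_mul_integral_exp hlam).continuousOn.congr
    fun _ hz => besselProfile_eq_integral hlam hz

lemma one_sub_one_sub_rpow_le {a v : ℝ} (ha : 0 ≤ a) (hv0 : 0 ≤ v) (hv1 : v ≤ 1) :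
    1 - (1 - v) ^ a ≤ (a + 1) * v := by
  rcases le_total a 1 with h | h
  · have h2 := Real.rpow_le_rpow_of_exponent_ge' (sub_nonneg.2 hv1) (by linarith) ha h
    rw [Real.rpow_one] at h2
    nlinarith
  · have h2 := one_add_mul_self_le_rpow_one_add (s := -v) (by linarith) h
    rw [← sub_eq_add_neg] at h2
    nlinarith

/-- The large-argument asymptotics `√z e^{-z} I_ν(z) = (2π)^{-1/2} + O(1/z)`. -/
lemma exists_abs_besselProfile_sub_le {lam : ℝ} (hlam : 1 ≤ lam) :
    ∃ C, ∀ z, 0 < z → |besselProfile lam z - 1 / √(2 * π)| ≤ C / z := by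
  set c := 1 / (2 ^ (lam - 1 / 2) * √π * Real.Gamma lam) with hcdef
  have hG : 0 < Real.Gamma lam := Real.Gamma_pos_of_pos (by linarith)
  have hpi : 0 < √π := Real.sqrt_pos.2 Real.pi_pos
  have hcpos : 0 < c := by positivity
  refine ⟨c * (2 ^ (lam - 1) * lam * Real.Gamma (lam + 1)), fun z hz => ?_⟩
  have hlead : 1 / √(2 * π) = c * (z ^ lam *
      ∫ s in Ioi (0 : ℝ), 2 ^ (lam - 1) * (s ^ (lam - 1) * Real.exp (-(z * s)))) := by
    rw [integral_const_mul, integral_rpow_mul_exp_neg_mul_Ioi (by linarith) hz, hcdef,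
      Real.div_rpow zero_le_one hz.le, Real.one_rpow, Real.sqrt_mul zero_le_two,
      show (lam - 1 / 2 : ℝ) = (lam - 1) + 1 / 2 by ring, Real.rpow_add two_pos,
      ← Real.sqrt_eq_rpow]
    have : 0 < z ^ lam := by positivity
    field_simp
  have hint : ∀ b : ℝ, 0 < b → IntegrableOn (fun s => s ^ (b - 1) * Real.exp (-(z * s))) (Ioi 0) := by
    intro b hb
    have := integrableOn_rpow_mul_exp_neg_mul_rpow (s := b - 1) (p := 1) (by linarith) one_pos hz
    simpa only [Real.rpow_one, neg_mul] using this
  have hc : Continuous fun s : ℝ => (s * (2 - s)) ^ (lam - 1) :=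
    Continuous.rpow_const (by fun_prop) fun _ => Or.inr (sub_nonneg.2 hlam)
  have hrep : ∫ s in (0 : ℝ)..2, Real.exp (-(z * s)) * (s * (2 - s)) ^ (lam - 1) =
      ∫ s in Ioi (0 : ℝ), (Ioc (0 : ℝ) 2).indicator
        (fun s => Real.exp (-(z * s)) * (s * (2 - s)) ^ (lam - 1)) s := by
    rw [setIntegral_indicator measurableSet_Ioc,
      inter_eq_self_of_subset_right Ioc_subset_Ioi_self,
      intervalIntegral.integral_of_le zero_le_two]
  have hI1 : IntegrableOn ((Ioc (0 : ℝ) 2).indicator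
        (fun s => Real.exp (-(z * s)) * (s * (2 - s)) ^ (lam - 1))) (Ioi 0) :=
    ((((Continuous.mul (by fun_prop) hc).integrableOn_Icc (a := 0) (b := 2)).mono_set
      Ioc_subset_Icc_self).integrable_indicator measurableSet_Ioc).integrableOn
  rw [besselProfile_eq_integral hlam hz, hlead, ← mul_sub, ← mul_sub, hrep,
    ← integral_sub hI1 ((hint lam (by linarith)).const_mul _), abs_mul, abs_mul, abs_of_pos hcpos,
    abs_of_pos (by positivity : 0 < z ^ lam), mul_div_assoc]
  refine mul_le_mul_of_nonneg_left ?_ hcpos.le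
  have hbd : |∫ s in Ioi (0 : ℝ), ((Ioc (0 : ℝ) 2).indicator
        (fun s => Real.exp (-(z * s)) * (s * (2 - s)) ^ (lam - 1)) s -
        2 ^ (lam - 1) * (s ^ (lam - 1) * Real.exp (-(z * s))))| ≤
      ∫ s in Ioi (0 : ℝ), 2 ^ (lam - 1) * lam * (s ^ (lam + 1 - 1) * Real.exp (-(z * s))) := by
    rw [← Real.norm_eq_abs]
    refine norm_integral_le_of_norm_le ((hint (lam + 1) (by linarith)).const_mul _)
      ((ae_restrict_iff' measurableSet_Ioi).2 (Eventually.of_forall fun s hs => ?_))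
    have hs0 : (0 : ℝ) < s := hs
    have hss : s ^ (lam + 1 - 1) = s ^ (lam - 1) * s := by
      rw [← Real.rpow_add_one hs0.ne']
      congr 1
      ring
    rw [hss, Real.norm_eq_abs]
    by_cases h2 : s ≤ 2
    · have hmem : s ∈ Ioc (0 : ℝ) 2 := ⟨hs0, h2⟩
      rw [indicator_of_mem hmem,
        show s * (2 - s) = 2 * (s * (1 - s / 2)) by ring,
        Real.mul_rpow zero_le_two (mul_nonneg hs0.le (by linarith)),
        Real.mul_rpow hs0.le (by linarith)]
      have hb := one_sub_one_sub_rpow_le (a := lam - 1) (v := s / 2) (by linarith) (by linarith)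
        (by linarith)
      have hb1 : (1 - s / 2) ^ (lam - 1) ≤ 1 :=
        Real.rpow_le_one (by linarith) (by linarith) (by linarith)
      rw [abs_sub_comm, show ∀ A E S P : ℝ, A * (S * E) - E * (A * (S * P)) = A * (S * E) * (1 - P)
        by intros; ring, abs_of_nonneg (mul_nonneg (by positivity) (by linarith))]
      calc _ ≤ 2 ^ (lam - 1) * (s ^ (lam - 1) * Real.exp (-(z * s))) * (lam * s) := by
            gcongr
            nlinarith
        _ = _ := by ring
    · have hmem : s ∉ Ioc (0 : ℝ) 2 := fun h => h2 h.2
      rw [indicator_of_notMem hmem, zero_sub, abs_neg,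
        abs_of_nonneg (by positivity)]
      calc _ = 2 ^ (lam - 1) * (s ^ (lam - 1) * Real.exp (-(z * s))) * 1 := by ring
        _ ≤ 2 ^ (lam - 1) * (s ^ (lam - 1) * Real.exp (-(z * s))) * (lam * s) := by
            gcongr
            nlinarith
        _ = _ := by ring
  refine (mul_le_mul_of_nonneg_left hbd (by positivity)).trans_eq ?_
  rw [integral_const_mul, integral_rpow_mul_exp_neg_mul_Ioi (by linarith) hz,
    Real.div_rpow zero_le_one hz.le, Real.one_rpow, Real.rpow_add_one hz.ne']
  have : 0 < z ^ lam := by positivity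
  field_simp

lemma exists_abs_besselProfile_le {lam : ℝ} (hlam : 1 ≤ lam) :
    ∃ C, 0 < C ∧ ∀ z, 0 < z → |besselProfile lam z| ≤ C := by
  obtain ⟨C₁, h₁⟩ := exists_abs_besselProfile_sub_le hlam
  obtain ⟨C₂, h₂⟩ := (isCompact_Icc (a := (0 : ℝ)) (b := 1)).exists_bound_of_continuousOn
    (continuous_rpow_mul_integral_exp hlam).continuousOn
  refine ⟨|C₁| + |C₂| + 1 / √(2 * π), by positivity, fun z hz => ?_⟩
  have hp : 0 < 1 / √(2 * π) := by positivity
  rcases le_total z 1 with hz1 | hz1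
  · have := h₂ z ⟨hz.le, hz1⟩
    rw [← besselProfile_eq_integral hlam hz, Real.norm_eq_abs] at this
    linarith [le_abs_self C₂, abs_nonneg C₁]
  · have h := h₁ z hz
    have h3 : C₁ / z ≤ |C₁| :=
      (div_le_div_of_nonneg_right (le_abs_self C₁) hz.le).trans (div_le_self (abs_nonneg _) hz1)
    have h4 := abs_sub_abs_le_abs_sub (besselProfile lam z) (1 / √(2 * π))
    rw [abs_of_pos hp] at h4
    linarith [abs_nonneg C₂]

lemma besselHeatKernel_eq (lam : ℝ) {t x y : ℝ} (ht : 0 < t) (hx : 0 < x) (hy : 0 < y) :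
    besselHeatKernel lam t x y =
      (√(2 * t))⁻¹ * besselProfile lam (x * y / (2 * t)) * Real.exp (-(x - y) ^ 2 / (4 * t)) := by
  have h2t : 0 < √(2 * t) := by positivity
  rw [besselHeatKernel, besselProfile, Real.sqrt_div (by positivity),
    show -(x ^ 2 + y ^ 2) / (4 * t) = -(x * y / (2 * t)) + -(x - y) ^ 2 / (4 * t) by
      field_simp; ring, Real.exp_add]
  have hs : √(2 * t) ^ 2 = 2 * t := Real.sq_sqrt (by positivity)
  field_simp
  rw [hs, mul_comm]

lemma continuousOn_besselHeatKernel {lam : ℝ} (hlam : 1 ≤ lam) :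
    ContinuousOn (fun p : ℝ × ℝ × ℝ => besselHeatKernel lam p.1 p.2.1 p.2.2)
      (Ioi 0 ×ˢ Ioi 0 ×ˢ Ioi 0) := by
  refine ContinuousOn.congr (f := fun p : ℝ × ℝ × ℝ => (√(2 * p.1))⁻¹ *
    besselProfile lam (p.2.1 * p.2.2 / (2 * p.1)) *
      Real.exp (-(p.2.1 - p.2.2) ^ 2 / (4 * p.1))) ?_
    fun p hp => besselHeatKernel_eq lam hp.1 hp.2.1 hp.2.2
  have hne : ∀ p ∈ (Ioi 0 ×ˢ Ioi 0 ×ˢ Ioi 0 : Set (ℝ × ℝ × ℝ)), 0 < p.1 := fun p hp => hp.1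
  refine ContinuousOn.mul (ContinuousOn.mul ?_ ?_) ?_
  · refine ContinuousOn.inv₀ (by fun_prop) fun p hp => ?_
    have := hne p hp
    positivity
  · refine (continuousOn_besselProfile hlam).comp ?_ ?_
    · refine ContinuousOn.div (by fun_prop) (by fun_prop) fun p hp => ?_
      have := hne p hp
      positivity
    · rintro p ⟨h1, h2, h3⟩
      have h1 : 0 < p.1 := h1
      have h2 : 0 < p.2.1 := h2
      have h3 : 0 < p.2.2 := h3
      exact (by positivity : 0 < p.2.1 * p.2.2 / (2 * p.1))
  · refine Real.continuous_exp.comp_continuousOn (ContinuousOn.div (by fun_prop) (by fun_prop)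
      fun p hp => ?_)
    have := hne p hp
    positivity

/-- The Gaussian upper bound for the Bessel heat kernel. -/
lemma exists_abs_besselHeatKernel_le {lam : ℝ} (hlam : 1 ≤ lam) :
    ∃ C, 0 < C ∧ ∀ t x y, 0 < t → 0 < x → 0 < y →
      |besselHeatKernel lam t x y| ≤ C * ((√t)⁻¹ * Real.exp (-(x - y) ^ 2 / (4 * t))) := by
  obtain ⟨C, hC, h⟩ := exists_abs_besselProfile_le hlam
  refine ⟨C, hC, fun t x y ht hx hy => ?_⟩
  rw [besselHeatKernel_eq lam ht hx hy, abs_mul, abs_mul, Real.abs_exp,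
    abs_of_pos (by positivity : 0 < (√(2 * t))⁻¹)]
  calc _ ≤ (√t)⁻¹ * C * Real.exp (-(x - y) ^ 2 / (4 * t)) := by
        gcongr
        · linarith
        · exact h _ (by positivity)
    _ = _ := by ring

lemma integrable_exp_neg_sub_sq_div (x : ℝ) {b : ℝ} (hb : 0 < b) :
    Integrable fun y => Real.exp (-(x - y) ^ 2 / b) := by
  have h := (integrable_exp_neg_mul_sq (inv_pos.2 hb)).comp_sub_left x
  refine h.congr (Eventually.of_forall fun y => ?_)
  simp only
  congr 1
  field_simp

lemma integral_exp_neg_sub_sq_div (x b : ℝ) :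
    ∫ y : ℝ, Real.exp (-(x - y) ^ 2 / b) = √(π * b) := by
  have h := integral_gaussian b⁻¹
  rw [div_inv_eq_mul] at h
  rw [← h, ← integral_sub_left_eq_self (fun y => Real.exp (-b⁻¹ * y ^ 2)) volume x]
  congr 1
  ext y
  congr 1
  ring

lemma aestronglyMeasurable_besselHeatKernel {lam t x : ℝ} (hlam : 1 ≤ lam) (ht : 0 < t)
    (hx : 0 < x) :
    AEStronglyMeasurable (besselHeatKernel lam t x) (volume.restrict (Ioi 0)) := by
  refine ContinuousOn.aestronglyMeasurable ?_ measurableSet_Ioi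
  exact (continuousOn_besselHeatKernel hlam).comp (f := fun y : ℝ => (t, x, y)) (by fun_prop)
    fun y hy => ⟨ht, hx, hy⟩

lemma aestronglyMeasurable_besselHeatKernel_prod {lam x : ℝ} (hlam : 1 ≤ lam) (hx : 0 < x) :
    AEStronglyMeasurable (fun p : ℝ × ℝ => besselHeatKernel lam p.2 x p.1)
      ((volume.restrict (Ioi 0)).prod (volume.restrict (Ioi 0))) := by
  rw [Measure.prod_restrict]
  refine ContinuousOn.aestronglyMeasurable ?_ (measurableSet_Ioi.prod measurableSet_Ioi)
  exact (continuousOn_besselHeatKernel hlam).comp (f := fun p : ℝ × ℝ => (p.2, x, p.1))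
    (by fun_prop) fun p hp => ⟨hp.2, hx, hp.1⟩

lemma integrableOn_besselHeatKernel {lam t x : ℝ} (hlam : 1 ≤ lam) (ht : 0 < t) (hx : 0 < x) :
    IntegrableOn (besselHeatKernel lam t x) (Ioi 0) := by
  obtain ⟨C, hC, h⟩ := exists_abs_besselHeatKernel_le hlam
  refine Integrable.mono' (g := fun y => C * ((√t)⁻¹ * Real.exp (-(x - y) ^ 2 / (4 * t))))
    (((integrable_exp_neg_sub_sq_div x (by positivity)).const_mul _).const_mul _).integrableOn
    (aestronglyMeasurable_besselHeatKernel hlam ht hx) ?_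
  exact (ae_restrict_iff' measurableSet_Ioi).2 (Eventually.of_forall fun y hy => h t x y ht hx hy)

lemma le_mul_sqrt_of_le_of_le_mul {C w v : ℝ} (hC : 0 ≤ C) (hv : 0 < v) (h1 : w ≤ C)
    (h2 : w ≤ C * v) : w ≤ C * √v := by
  rcases le_total v 1 with h | h
  · refine h2.trans ?_
    have : v ≤ √v := by
      rw [Real.le_sqrt hv.le hv.le]
      nlinarith
    gcongr
  · exact h1.trans (le_mul_of_one_le_right hC (Real.one_le_sqrt.2 h))

lemma exp_neg_le_inv_sqrt {s : ℝ} (hs : 0 < s) : Real.exp (-s) ≤ (√s)⁻¹ := by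
  rw [Real.exp_neg]
  refine inv_anti₀ (by positivity) ?_
  have h1 := Real.add_one_le_exp s
  have h2 : √s ^ 2 = s := Real.sq_sqrt hs.le
  nlinarith [sq_nonneg (√s - 1)]

/-- Comparison of the Bessel heat kernel, extended by zero to the line, with the Gauss kernel. -/
lemma exists_abs_besselHeatKernel_sub_gauss_le {lam : ℝ} (hlam : 1 ≤ lam) :
    ∃ C, 0 < C ∧ ∀ t x y, 0 < t → 0 < x →
      |(Ioi 0).indicator (besselHeatKernel lam t x) y -
        (√(4 * π * t))⁻¹ * Real.exp (-(x - y) ^ 2 / (4 * t))| ≤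
      C * (√t / x) * ((√t)⁻¹ * Real.exp (-(x - y) ^ 2 / (8 * t))) := by
  obtain ⟨C₁, hC₁, h₁⟩ := exists_abs_besselHeatKernel_le hlam
  obtain ⟨C₂, h₂⟩ := exists_abs_besselProfile_sub_le hlam
  obtain ⟨C₃, hC₃, h₃⟩ := exists_abs_besselProfile_le hlam
  have hL : (0 : ℝ) < 1 / √(2 * π) := by positivity
  refine ⟨2 * (|C₂| + C₃ + 1 / √(2 * π)) + 6 * (C₁ + 1), by positivity, fun t x y ht hx => ?_⟩
  have hst : 0 < √t := by positivity
  have hexp : Real.exp (-(x - y) ^ 2 / (4 * t)) ≤ Real.exp (-(x - y) ^ 2 / (8 * t)) := by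
    refine Real.exp_le_exp.2 ?_
    rw [div_le_div_iff₀ (by positivity) (by positivity)]
    nlinarith [mul_nonneg (sq_nonneg (x - y)) ht.le]
  have hG : (√(4 * π * t))⁻¹ ≤ (√t)⁻¹ := by
    gcongr
    nlinarith [Real.pi_gt_three]
  rcases le_or_gt (x / 2) y with hy | hy
  · have hy0 : 0 < y := by linarith
    rw [indicator_of_mem (mem_Ioi.2 hy0), besselHeatKernel_eq lam ht hx hy0]
    have e1 : (√(4 * π * t))⁻¹ = (√(2 * t))⁻¹ * (1 / √(2 * π)) := by
      rw [show 4 * π * t = (2 * t) * (2 * π) by ring, Real.sqrt_mul (by positivity), mul_inv,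
        one_div]
    set z := x * y / (2 * t) with hz
    have hz0 : 0 < z := by positivity
    have hzv : z⁻¹ ≤ 4 * t / x ^ 2 := by
      rw [hz, inv_div, div_le_div_iff₀ (by positivity) (by positivity)]
      have : x * x ≤ 2 * (x * y) := by nlinarith
      nlinarith
    have key : |besselProfile lam z - 1 / √(2 * π)| ≤
        (|C₂| + C₃ + 1 / √(2 * π)) * √(4 * t / x ^ 2) := by
      refine le_mul_sqrt_of_le_of_le_mul (by positivity) (by positivity) ?_ ?_
      · refine (abs_sub _ _).trans ?_
        rw [abs_of_pos hL]
        linarith [h₃ z hz0, abs_nonneg C₂]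
      · refine (h₂ z hz0).trans ?_
        rw [div_eq_mul_inv]
        gcongr
        linarith [le_abs_self C₂]
    have hsq : √(4 * t / x ^ 2) = 2 * (√t / x) := by
      rw [Real.sqrt_div (by positivity), Real.sqrt_sq hx.le, Real.sqrt_mul (by norm_num),
        show (4 : ℝ) = 2 ^ 2 by norm_num, Real.sqrt_sq zero_le_two]
      ring
    rw [hsq] at key
    rw [e1, ← sub_mul, ← mul_sub, abs_mul, abs_mul, Real.abs_exp,
      abs_of_pos (by positivity : 0 < (√(2 * t))⁻¹)]
    calc _ ≤ (√t)⁻¹ * ((|C₂| + C₃ + 1 / √(2 * π)) * (2 * (√t / x))) *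
          Real.exp (-(x - y) ^ 2 / (8 * t)) := by
          gcongr
          linarith
      _ = 2 * (|C₂| + C₃ + 1 / √(2 * π)) * (√t / x) *
          ((√t)⁻¹ * Real.exp (-(x - y) ^ 2 / (8 * t))) := by ring
      _ ≤ _ := by
          gcongr
          linarith
  · have hW : |(Ioi 0).indicator (besselHeatKernel lam t x) y| ≤
        C₁ * ((√t)⁻¹ * Real.exp (-(x - y) ^ 2 / (4 * t))) := by
      by_cases hy0 : 0 < y
      · rw [indicator_of_mem (mem_Ioi.2 hy0)]
        exact h₁ t x y ht hx hy0
      · rw [indicator_of_notMem (by simpa using hy0), abs_zero]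
        positivity
    have hgain : Real.exp (-(x - y) ^ 2 / (4 * t)) ≤
        6 * (√t / x) * Real.exp (-(x - y) ^ 2 / (8 * t)) := by
      have e1 : -(x - y) ^ 2 / (4 * t) = -((x - y) ^ 2 / (8 * t)) + -(x - y) ^ 2 / (8 * t) := by
        field_simp
        ring
      rw [e1, Real.exp_add]
      gcongr
      have hs : x ^ 2 / (32 * t) ≤ (x - y) ^ 2 / (8 * t) := by
        rw [div_le_div_iff₀ (by positivity) (by positivity)]
        have : x ^ 2 ≤ 4 * (x - y) ^ 2 := by nlinarith
        nlinarith
      calc Real.exp (-((x - y) ^ 2 / (8 * t))) ≤ Real.exp (-(x ^ 2 / (32 * t))) :=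
            Real.exp_le_exp.2 (neg_le_neg hs)
        _ ≤ (√(x ^ 2 / (32 * t)))⁻¹ := exp_neg_le_inv_sqrt (by positivity)
        _ = √32 * (√t / x) := by
            rw [Real.sqrt_div (by positivity), Real.sqrt_sq hx.le, Real.sqrt_mul (by norm_num),
              inv_div, mul_div_assoc]
        _ ≤ 6 * (√t / x) := by
            gcongr
            rw [Real.sqrt_le_iff]
            norm_num
    calc _ ≤ C₁ * ((√t)⁻¹ * Real.exp (-(x - y) ^ 2 / (4 * t))) +
          (√t)⁻¹ * Real.exp (-(x - y) ^ 2 / (4 * t)) := by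
          refine (abs_sub _ _).trans (add_le_add hW ?_)
          rw [abs_of_nonneg (by positivity)]
          gcongr
      _ = (C₁ + 1) * (√t)⁻¹ * Real.exp (-(x - y) ^ 2 / (4 * t)) := by ring
      _ ≤ (C₁ + 1) * (√t)⁻¹ * (6 * (√t / x) * Real.exp (-(x - y) ^ 2 / (8 * t))) := by gcongr
      _ = 6 * (C₁ + 1) * (√t / x) * ((√t)⁻¹ * Real.exp (-(x - y) ^ 2 / (8 * t))) := by ring
      _ ≤ _ := by
          gcongr
          have : 0 ≤ 2 * (|C₂| + C₃ + 1 / √(2 * π)) := by positivity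
          linarith

/-- `W_t^λ 1 - 1` is bounded and is `O(√t / x)`. -/
lemma exists_abs_heatOne_sub_one_le {lam : ℝ} (hlam : 1 ≤ lam) :
    ∃ C, 0 < C ∧ ∀ t x, 0 < t → 0 < x →
      |heatOne lam t x - 1| ≤ C ∧ |heatOne lam t x - 1| ≤ C * (√t / x) := by
  obtain ⟨C₁, hC₁, h₁⟩ := exists_abs_besselHeatKernel_le hlam
  obtain ⟨C₂, hC₂, h₂⟩ := exists_abs_besselHeatKernel_sub_gauss_le hlam
  have hmass : ∀ t x b : ℝ, 0 < t → 0 ≤ b →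
      ∫ y : ℝ, (√t)⁻¹ * Real.exp (-(x - y) ^ 2 / (b * t)) = √(π * b) := by
    intro t x b ht hb
    have hst : 0 < √t := by positivity
    rw [integral_const_mul, integral_exp_neg_sub_sq_div, ← mul_assoc,
      Real.sqrt_mul (by positivity)]
    field_simp
  refine ⟨C₁ * √(π * 4) + 1 + C₂ * √(π * 8), by positivity, fun t x ht hx => ⟨?_, ?_⟩⟩
  · have hb : |heatOne lam t x| ≤ C₁ * √(π * 4) := by
      have hg : Integrable fun y : ℝ => C₁ * ((√t)⁻¹ * Real.exp (-(x - y) ^ 2 / (4 * t))) :=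
        ((integrable_exp_neg_sub_sq_div x (by positivity)).const_mul _).const_mul _
      calc |heatOne lam t x| ≤ ∫ y in Ioi (0 : ℝ),
            C₁ * ((√t)⁻¹ * Real.exp (-(x - y) ^ 2 / (4 * t))) :=
            norm_integral_le_of_norm_le (f := besselHeatKernel lam t x) hg.integrableOn
              ((ae_restrict_iff' measurableSet_Ioi).2
                (Eventually.of_forall fun y hy => h₁ t x y ht hx hy))
        _ ≤ ∫ y : ℝ, C₁ * ((√t)⁻¹ * Real.exp (-(x - y) ^ 2 / (4 * t))) :=
            setIntegral_le_integral hg (Eventually.of_forall fun y => by positivity)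
        _ = _ := by rw [integral_const_mul, hmass t x 4 ht (by norm_num)]
    have := abs_sub (heatOne lam t x) 1
    rw [abs_one] at this
    have : 0 ≤ C₂ * √(π * 8) := by positivity
    linarith
  · have h4 : ∫ y : ℝ, (√(4 * π * t))⁻¹ * Real.exp (-(x - y) ^ 2 / (4 * t)) = 1 := by
      rw [integral_const_mul, integral_exp_neg_sub_sq_div,
        show π * (4 * t) = 4 * π * t by ring, inv_mul_cancel₀ (by positivity)]
    have hI : Integrable ((Ioi 0).indicator (besselHeatKernel lam t x)) :=
      (integrableOn_besselHeatKernel hlam ht hx).integrable_indicator measurableSet_Ioi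
    have hw : heatOne lam t x = ∫ y : ℝ, (Ioi 0).indicator (besselHeatKernel lam t x) y :=
      (integral_indicator measurableSet_Ioi).symm
    rw [← h4, hw, ← integral_sub hI
      ((integrable_exp_neg_sub_sq_div x (by positivity)).const_mul _)]
    have hb := norm_integral_le_of_norm_le
      (f := fun y => (Ioi 0).indicator (besselHeatKernel lam t x) y -
        (√(4 * π * t))⁻¹ * Real.exp (-(x - y) ^ 2 / (4 * t)))
      (((integrable_exp_neg_sub_sq_div x (by positivity : 0 < 8 * t)).const_mul (√t)⁻¹).const_mul
        (C₂ * (√t / x))) (Eventually.of_forall fun y => h₂ t x y ht hx)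
    rw [integral_const_mul, hmass t x 8 ht (by norm_num), Real.norm_eq_abs] at hb
    refine hb.trans ?_
    rw [show C₂ * (√t / x) * √(π * 8) = C₂ * √(π * 8) * (√t / x) by ring]
    gcongr
    have : 0 ≤ C₁ * √(π * 4) := by positivity
    linarith

lemma continuousAt_besselHeatKernel {lam t x y : ℝ} (hlam : 1 ≤ lam) (ht : 0 < t) (hx : 0 < x)
    (hy : 0 < y) :
    ContinuousAt (fun p : ℝ × ℝ × ℝ => besselHeatKernel lam p.1 p.2.1 p.2.2) (t, x, y) :=
  (continuousOn_besselHeatKernel hlam).continuousAt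
    ((isOpen_Ioi.prod (isOpen_Ioi.prod isOpen_Ioi)).mem_nhds ⟨ht, hx, hy⟩)

/-- The time integrand obtained from the Gaussian bound, at spatial distance `|h|`. -/
def gaussTimeIntegrand (σ h t : ℝ) : ℝ := (√t)⁻¹ * Real.exp (-h ^ 2 / (4 * t)) * t ^ (-1 - σ)

lemma gaussTimeIntegrand_nonneg {σ h t : ℝ} (ht : 0 < t) : 0 ≤ gaussTimeIntegrand σ h t := by
  rw [gaussTimeIntegrand]
  positivity

lemma gaussTimeIntegrand_sq_mul (σ : ℝ) {h s : ℝ} (hh : h ≠ 0) (hs : 0 < s) :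
    gaussTimeIntegrand σ h (h ^ 2 * s) = |h| ^ (-3 - 2 * σ) * gaussTimeIntegrand σ 1 s := by
  have hh' : 0 < |h| := abs_pos.2 hh
  have e1 : |h| ^ (-3 - 2 * σ) = |h|⁻¹ * (h ^ 2) ^ (-1 - σ) := by
    rw [← sq_abs, ← Real.rpow_natCast, ← Real.rpow_mul hh'.le, ← Real.rpow_neg_one,
      ← Real.rpow_add hh']
    congr 1
    push_cast
    ring
  rw [gaussTimeIntegrand, gaussTimeIntegrand, Real.mul_rpow (sq_nonneg h) hs.le,
    Real.sqrt_mul (sq_nonneg h), Real.sqrt_sq_eq_abs, e1,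
    show -h ^ 2 / (4 * (h ^ 2 * s)) = -1 ^ 2 / (4 * s) by field_simp]
  field_simp

lemma integrableOn_gaussTimeIntegrand {σ h : ℝ} (hσ : -1 / 2 < σ) (hh : h ≠ 0) :
    IntegrableOn (gaussTimeIntegrand σ h) (Ioi 0) := by
  have h1 : IntegrableOn (gaussTimeIntegrand σ 1) (Ioi 0) := by
    have hb := integrableOn_rpow_mul_exp_neg_mul_rpow (s := σ - 1 / 2) (p := 1) (b := 1 / 4)
      (by linarith) one_pos (by norm_num)
    refine ((integrableOn_Ioi_comp_rpow_iff' _ (by norm_num : (-1 : ℝ) ≠ 0)).2 hb).congr_fun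
      (fun s hs => ?_) measurableSet_Ioi
    have hs0 : (0 : ℝ) < s := hs
    simp only [smul_eq_mul, Real.rpow_one]
    rw [← Real.rpow_mul hs0.le, ← mul_assoc, ← Real.rpow_add hs0, gaussTimeIntegrand,
      Real.rpow_neg_one, Real.sqrt_eq_rpow, ← Real.rpow_neg hs0.le, mul_right_comm,
      ← Real.rpow_add hs0]
    congr 2
    · ring
    · field_simp
  have h2 := (integrableOn_Ioi_comp_mul_left_iff (gaussTimeIntegrand σ h) 0
    (by positivity : 0 < h ^ 2)).1
  rw [mul_zero] at h2
  exact h2 (IntegrableOn.congr_fun (h1.const_mul _)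
    (fun s hs => (gaussTimeIntegrand_sq_mul σ hh hs).symm) measurableSet_Ioi)

lemma integral_gaussTimeIntegrand (σ : ℝ) {h : ℝ} (hh : h ≠ 0) :
    ∫ t in Ioi (0 : ℝ), gaussTimeIntegrand σ h t =
      (∫ t in Ioi (0 : ℝ), gaussTimeIntegrand σ 1 t) * |h| ^ (-1 - 2 * σ) := by
  have hh' : 0 < |h| := abs_pos.2 hh
  have h2 := integral_comp_mul_left_Ioi' (gaussTimeIntegrand σ h) 0 (by positivity : 0 < h ^ 2)
  rw [mul_zero, setIntegral_congr_fun measurableSet_Ioi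
    (fun s hs => gaussTimeIntegrand_sq_mul σ hh hs), integral_const_mul] at h2
  rw [← h2, smul_eq_mul, ← mul_assoc, mul_comm]
  congr 1
  rw [← sq_abs, ← Real.rpow_natCast, ← Real.rpow_add hh']
  congr 1
  push_cast
  ring

lemma abs_besselHeatKernel_mul_rpow_le {lam C t x y : ℝ} (σ : ℝ) (ht : 0 < t)
    (h : |besselHeatKernel lam t x y| ≤ C * ((√t)⁻¹ * Real.exp (-(x - y) ^ 2 / (4 * t)))) :
    |besselHeatKernel lam t x y * t ^ (-1 - σ)| ≤ C * gaussTimeIntegrand σ (x - y) t := by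
  rw [abs_mul, abs_of_pos (Real.rpow_pos_of_pos ht _), gaussTimeIntegrand]
  calc _ ≤ C * ((√t)⁻¹ * Real.exp (-(x - y) ^ 2 / (4 * t))) * t ^ (-1 - σ) := by gcongr
    _ = _ := by ring

lemma integrableOn_besselHeatKernel_mul_rpow {lam σ x y : ℝ} (hlam : 1 ≤ lam) (hσ : -1 / 2 < σ)
    (hx : 0 < x) (hy : 0 < y) (hxy : x ≠ y) :
    IntegrableOn (fun t => besselHeatKernel lam t x y * t ^ (-1 - σ)) (Ioi 0) := by
  obtain ⟨C, hC, h⟩ := exists_abs_besselHeatKernel_le hlam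
  refine Integrable.mono' ((integrableOn_gaussTimeIntegrand hσ (sub_ne_zero.2 hxy)).const_mul C)
    ?_ ((ae_restrict_iff' measurableSet_Ioi).2 (Eventually.of_forall fun t ht =>
      abs_besselHeatKernel_mul_rpow_le σ ht (h t x y ht hx hy)))
  refine ContinuousOn.aestronglyMeasurable (ContinuousOn.mul ?_ ?_) measurableSet_Ioi
  · exact (continuousOn_besselHeatKernel hlam).comp (f := fun t : ℝ => (t, x, y)) (by fun_prop)
      fun t ht => ⟨ht, hx, hy⟩
  · exact continuousOn_id.rpow_const fun t ht => Or.inl (ne_of_gt ht)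

lemma exists_integral_abs_besselHeatKernel_mul_rpow_le {lam σ : ℝ} (hlam : 1 ≤ lam)
    (hσ : -1 / 2 < σ) :
    ∃ C, 0 ≤ C ∧ ∀ x y, 0 < x → 0 < y → x ≠ y →
      ∫ t in Ioi (0 : ℝ), |besselHeatKernel lam t x y * t ^ (-1 - σ)| ≤
        C * |x - y| ^ (-1 - 2 * σ) := by
  obtain ⟨C, hC, h⟩ := exists_abs_besselHeatKernel_le hlam
  refine ⟨C * ∫ t in Ioi (0 : ℝ), gaussTimeIntegrand σ 1 t, mul_nonneg hC.le
    (setIntegral_nonneg measurableSet_Ioi fun t ht => gaussTimeIntegrand_nonneg ht),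
    fun x y hx hy hxy => ?_⟩
  rw [mul_assoc, ← integral_gaussTimeIntegrand σ (sub_ne_zero.2 hxy), ← integral_const_mul]
  exact setIntegral_mono_on (integrableOn_besselHeatKernel_mul_rpow hlam hσ hx hy hxy).abs
    ((integrableOn_gaussTimeIntegrand hσ (sub_ne_zero.2 hxy)).const_mul C) measurableSet_Ioi
    fun t ht => abs_besselHeatKernel_mul_rpow_le σ ht (h t x y ht hx hy)

lemma exists_abs_fracKernelK_le {lam σ : ℝ} (hlam : 1 ≤ lam) (hσ : -1 / 2 < σ) :
    ∃ C, 0 ≤ C ∧ ∀ x y, 0 < x → 0 < y → x ≠ y →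
      |fracKernelK lam σ x y| ≤ C * |x - y| ^ (-1 - 2 * σ) := by
  obtain ⟨C, hC, h⟩ := exists_integral_abs_besselHeatKernel_mul_rpow_le hlam hσ
  refine ⟨|1 / (-gammaNeg σ)| * C, by positivity, fun x y hx hy hxy => ?_⟩
  rw [fracKernelK, abs_mul, mul_assoc]
  gcongr
  exact (abs_integral_le_integral_abs).trans (h x y hx hy hxy)

/-- Along a fixed displacement `h ≠ 0`, the kernel `K_σ^λ(x, x + h)` is continuous in `x`. -/
lemma continuousAt_fracKernelK_add {lam σ x h : ℝ} (hlam : 1 ≤ lam) (hσ : -1 / 2 < σ)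
    (hx : 0 < x) (hxh : 0 < x + h) (hh : h ≠ 0) :
    ContinuousAt (fun x' => fracKernelK lam σ x' (x' + h)) x := by
  obtain ⟨C, hC, hb⟩ := exists_abs_besselHeatKernel_le hlam
  have hev : ∀ᶠ x' in nhds x, 0 < x' ∧ 0 < x' + h :=
    (eventually_gt_nhds hx).and
      ((continuous_id.add continuous_const).continuousAt.eventually (eventually_gt_nhds hxh))
  refine continuousAt_const.mul (continuousAt_of_dominated
    (bound := fun t => C * gaussTimeIntegrand σ h t) ?_ ?_
    ((integrableOn_gaussTimeIntegrand hσ hh).const_mul C) ?_)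
  · filter_upwards [hev] with x' hx'
    exact (integrableOn_besselHeatKernel_mul_rpow hlam hσ hx'.1 hx'.2
      (by simpa using hh)).aestronglyMeasurable
  · filter_upwards [hev] with x' hx'
    refine (ae_restrict_iff' measurableSet_Ioi).2 (Eventually.of_forall fun t ht => ?_)
    have := abs_besselHeatKernel_mul_rpow_le σ ht (hb t x' (x' + h) ht hx'.1 hx'.2)
    rwa [gaussTimeIntegrand, show x' - (x' + h) = -h by ring, neg_sq] at this
  · refine (ae_restrict_iff' measurableSet_Ioi).2 (Eventually.of_forall fun t ht => ?_)
    refine ContinuousAt.mul ?_ continuousAt_const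
    exact (continuousAt_besselHeatKernel hlam ht hx hxh).comp (f := fun x' : ℝ => (t, x', x' + h)) (by fun_prop)

lemma continuousAt_heatOne {lam t x : ℝ} (hlam : 1 ≤ lam) (ht : 0 < t) (hx : 0 < x) :
    ContinuousAt (heatOne lam t) x := by
  obtain ⟨C, hC, hb⟩ := exists_abs_besselHeatKernel_le hlam
  refine continuousAt_of_dominated (F := fun x' y => besselHeatKernel lam t x' y)
    (bound := fun y => C * ((√t)⁻¹ * Real.exp (1 / (4 * t))) *
      Real.exp (-(x - y) ^ 2 / (8 * t))) ?_ ?_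
    ((integrable_exp_neg_sub_sq_div x (by positivity)).const_mul _).integrableOn ?_
  · filter_upwards [eventually_gt_nhds hx] with x' hx'
    exact aestronglyMeasurable_besselHeatKernel hlam ht hx'
  · filter_upwards [eventually_gt_nhds hx, Metric.ball_mem_nhds x one_pos] with x' hx' hd
    refine (ae_restrict_iff' measurableSet_Ioi).2 (Eventually.of_forall fun y hy => ?_)
    refine (hb t x' y ht hx' hy).trans ?_
    rw [mul_assoc, mul_assoc, ← Real.exp_add]
    gcongr
    rw [Metric.mem_ball, Real.dist_eq] at hd
    have hd2 : (x' - x) ^ 2 ≤ 1 := by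
      rw [← sq_abs]
      exact pow_le_one₀ (abs_nonneg _) hd.le
    rw [show 1 / (4 * t) + -(x - y) ^ 2 / (8 * t) = (2 - (x - y) ^ 2) / (8 * t) by
        field_simp; ring,
      show -(x' - y) ^ 2 / (4 * t) = (-(2 * (x' - y) ^ 2)) / (8 * t) by field_simp; ring]
    gcongr
    nlinarith [sq_nonneg ((x' - y) + (x' - x))]
  · refine (ae_restrict_iff' measurableSet_Ioi).2 (Eventually.of_forall fun y hy => ?_)
    exact (continuousAt_besselHeatKernel hlam ht hx hy).comp (f := fun x' : ℝ => (t, x', y)) (by fun_prop)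

lemma aestronglyMeasurable_heatOne {lam x : ℝ} (hlam : 1 ≤ lam) (hx : 0 < x) :
    AEStronglyMeasurable (fun t => heatOne lam t x) (volume.restrict (Ioi 0)) :=
  (aestronglyMeasurable_besselHeatKernel_prod hlam hx).prod_swap.integral_prod_right'

lemma integrableOn_min_one_sqrt_mul_rpow {σ : ℝ} (hσ0 : 0 < σ) (hσ1 : σ < 1 / 2) :
    IntegrableOn (fun t => min 1 √t * t ^ (-1 - σ)) (Ioi 0) := by
  rw [← Ioc_union_Ioi_eq_Ioi zero_le_one]
  refine IntegrableOn.union ?_ ?_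
  · have h := intervalIntegral.intervalIntegrable_rpow' (a := 0) (b := 1)
      (by linarith : -1 < -1 / 2 - σ)
    rw [intervalIntegrable_iff_integrableOn_Ioc_of_le zero_le_one] at h
    refine h.congr_fun (fun t ht => ?_) measurableSet_Ioc
    have ht0 : 0 < t := ht.1
    simp only
    rw [min_eq_right (Real.sqrt_le_one.2 ht.2), Real.sqrt_eq_rpow, ← Real.rpow_add ht0]
    congr 1
    ring
  · refine (integrableOn_Ioi_rpow_of_lt (by linarith : -1 - σ < -1) one_pos).congr_fun
      (fun t ht => ?_) measurableSet_Ioi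
    simp only
    rw [min_eq_left (Real.one_le_sqrt.2 (le_of_lt ht)), one_mul]

lemma exists_abs_heatOne_sub_one_mul_rpow_le {lam : ℝ} (hlam : 1 ≤ lam) (σ : ℝ) :
    ∃ C, 0 < C ∧ ∀ t x, 0 < t → 0 < x →
      |(heatOne lam t x - 1) * t ^ (-1 - σ)| ≤ C * (1 + x⁻¹) * (min 1 √t * t ^ (-1 - σ)) := by
  obtain ⟨C, hC, h⟩ := exists_abs_heatOne_sub_one_le hlam
  refine ⟨C, hC, fun t x ht hx => ?_⟩
  rw [abs_mul, abs_of_pos (Real.rpow_pos_of_pos ht _), ← mul_assoc]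
  gcongr
  obtain ⟨h1, h2⟩ := h t x ht hx
  have hxi : 0 < x⁻¹ := inv_pos.2 hx
  rcases le_total 1 √t with hs | hs
  · rw [min_eq_left hs]
    nlinarith
  · rw [min_eq_right hs]
    rw [div_eq_mul_inv] at h2
    nlinarith [Real.sqrt_nonneg t]

lemma integrableOn_heatOne_sub_one_mul_rpow {lam σ x : ℝ} (hlam : 1 ≤ lam) (hσ0 : 0 < σ)
    (hσ1 : σ < 1 / 2) (hx : 0 < x) :
    IntegrableOn (fun t => (heatOne lam t x - 1) * t ^ (-1 - σ)) (Ioi 0) := by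
  obtain ⟨C, hC, h⟩ := exists_abs_heatOne_sub_one_mul_rpow_le hlam σ
  refine Integrable.mono' ((integrableOn_min_one_sqrt_mul_rpow hσ0 hσ1).const_mul (C * (1 + x⁻¹)))
    (((aestronglyMeasurable_heatOne hlam hx).sub aestronglyMeasurable_const).mul ?_)
    ((ae_restrict_iff' measurableSet_Ioi).2 (Eventually.of_forall fun t ht => h t x ht hx))
  exact (Measurable.pow_const measurable_id _).aestronglyMeasurable

lemma continuousAt_fracFunB {lam σ x : ℝ} (hlam : 1 ≤ lam) (hσ0 : 0 < σ) (hσ1 : σ < 1 / 2)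
    (hx : 0 < x) : ContinuousAt (fracFunB lam σ) x := by
  obtain ⟨C, hC, h⟩ := exists_abs_heatOne_sub_one_mul_rpow_le hlam σ
  refine continuousAt_const.mul (continuousAt_of_dominated
    (bound := fun t => C * (1 + (x / 2)⁻¹) * (min 1 √t * t ^ (-1 - σ))) ?_ ?_
    ((integrableOn_min_one_sqrt_mul_rpow hσ0 hσ1).const_mul _) ?_)
  · filter_upwards [eventually_gt_nhds hx] with x' hx'
    exact (integrableOn_heatOne_sub_one_mul_rpow hlam hσ0 hσ1 hx').aestronglyMeasurable
  · filter_upwards [eventually_gt_nhds (half_lt_self hx)] with x' hx'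
    refine (ae_restrict_iff' measurableSet_Ioi).2 (Eventually.of_forall fun t ht => ?_)
    have ht0 : (0 : ℝ) < t := ht
    refine (h t x' ht (by linarith)).trans ?_
    gcongr
  · refine (ae_restrict_iff' measurableSet_Ioi).2 (Eventually.of_forall fun t ht => ?_)
    exact ((continuousAt_heatOne hlam ht hx).sub continuousAt_const).mul continuousAt_const

lemma integrable_comp_abs {f : ℝ → ℝ} (hf : IntegrableOn f (Ioi 0)) :
    Integrable fun x => f |x| := by
  have h1 : IntegrableOn (fun x => f |x|) (Ioi 0) :=
    hf.congr_fun (fun x hx => by rw [abs_of_pos hx]) measurableSet_Ioi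
  have h2 : IntegrableOn (fun x => f |x|) (Iio 0) := by
    have h := ((Measure.measurePreserving_neg (volume : Measure ℝ)).integrableOn_comp_preimage
      (Homeomorph.neg ℝ).measurableEmbedding).2 h1
    simpa [Function.comp_def] using h
  rw [← integrableOn_univ, ← Iio_union_Ici (a := (0 : ℝ))]
  exact h2.union ((integrableOn_Ici_iff_integrableOn_Ioi).2 h1)

lemma integrable_min_one_rpow_mul_rpow {σ α : ℝ} (hσ0 : 0 < σ) (hα : 2 * σ < α) :
    Integrable fun h : ℝ => min 1 (|h| ^ α) * |h| ^ (-1 - 2 * σ) := by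
  refine integrable_comp_abs (f := fun r => min 1 (r ^ α) * r ^ (-1 - 2 * σ)) ?_
  rw [← Ioc_union_Ioi_eq_Ioi zero_le_one]
  refine IntegrableOn.union ?_ ?_
  · have h := intervalIntegral.intervalIntegrable_rpow' (a := 0) (b := 1)
      (by linarith : -1 < α + (-1 - 2 * σ))
    rw [intervalIntegrable_iff_integrableOn_Ioc_of_le zero_le_one] at h
    refine h.congr_fun (fun t ht => ?_) measurableSet_Ioc
    simp only
    rw [min_eq_right (Real.rpow_le_one ht.1.le ht.2 (by linarith)), ← Real.rpow_add ht.1]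
  · refine (integrableOn_Ioi_rpow_of_lt (by linarith : -1 - 2 * σ < -1) one_pos).congr_fun
      (fun t ht => ?_) measurableSet_Ioi
    simp only
    rw [min_eq_left (Real.one_le_rpow (le_of_lt ht) (by linarith)), one_mul]

/-- A function in `C^α_+`, extended by zero to the line, is globally Hölder continuous. -/
lemma MemHolderPlus.exists_holder_indicator {α : ℝ} {u : ℝ → ℝ} (hα : 0 < α)
    (hu : MemHolderPlus α u) :
    ∃ M, 0 ≤ M ∧ ∀ a b, |(Ioi 0).indicator u a - (Ioi 0).indicator u b| ≤ M * |a - b| ^ α := by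
  obtain ⟨-, ⟨M₁, h₁⟩, ⟨M₂, h₂⟩⟩ := hu
  have hg : ∀ a, 0 < a → |u a| ≤ (|M₁| + |M₂|) * a ^ α := by
    intro a ha
    have h := h₂ ⟨a, ha, rfl⟩
    rw [div_le_iff₀ (Real.rpow_pos_of_pos ha _)] at h
    refine h.trans ?_
    gcongr
    linarith [le_abs_self M₂, abs_nonneg M₁]
  refine ⟨|M₁| + |M₂|, by positivity, fun a b => ?_⟩
  by_cases ha : 0 < a <;> by_cases hb : 0 < b
  · rw [indicator_of_mem (mem_Ioi.2 ha), indicator_of_mem (mem_Ioi.2 hb)]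
    rcases eq_or_ne a b with rfl | hab
    · rw [sub_self, abs_zero]
      positivity
    · have h := h₁ ⟨a, b, ha, hb, hab, rfl⟩
      rw [div_le_iff₀ (Real.rpow_pos_of_pos (abs_pos.2 (sub_ne_zero.2 hab)) _)] at h
      refine h.trans ?_
      gcongr
      linarith [le_abs_self M₁, abs_nonneg M₂]
  · rw [indicator_of_mem (mem_Ioi.2 ha), indicator_of_notMem (by simpa using hb), sub_zero]
    refine (hg a ha).trans ?_
    gcongr
    exact le_trans (by linarith) (le_abs_self _)
  · rw [indicator_of_mem (mem_Ioi.2 hb), indicator_of_notMem (by simpa using ha), zero_sub,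
      abs_neg]
    refine (hg b hb).trans ?_
    gcongr
    rw [abs_sub_comm]
    exact le_trans (by linarith) (le_abs_self _)
  · rw [indicator_of_notMem (by simpa using ha), indicator_of_notMem (by simpa using hb), sub_zero,
      abs_zero]
    positivity

lemma integrable_indicator_mul_one_add_abs_rpow {σ : ℝ} {u : ℝ → ℝ}
    (huL : IntegrableOn (fun y => |u y| / (1 + y) ^ (1 + 2 * σ)) (Ioi 0)) :
    Integrable fun y => |(Ioi 0).indicator u y| * (1 + |y|) ^ (-1 - 2 * σ) := by
  refine (huL.integrable_indicator measurableSet_Ioi).congr (Eventually.of_forall fun y => ?_)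
  by_cases hy : 0 < y
  · have hm : y ∈ Ioi (0 : ℝ) := hy
    simp only [indicator_of_mem hm]
    rw [abs_of_pos hy, show -1 - 2 * σ = -(1 + 2 * σ) by ring, Real.rpow_neg (by positivity),
      div_eq_mul_inv]
  · have hm : y ∉ Ioi (0 : ℝ) := hy
    simp only [indicator_of_notMem hm, abs_zero, zero_mul]

/-- Absolute convergence of the first-order difference against `|h|^{-1-2σ}`. -/
lemma integrable_abs_sub_mul_rpow {σ α M : ℝ} {v : ℝ → ℝ} (hσ0 : 0 < σ) (hα : 2 * σ < α)
    (hM : 0 ≤ M) (hv : ∀ a b, |v a - v b| ≤ M * |a - b| ^ α)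
    (hvm : AEStronglyMeasurable v) (hvL : Integrable fun y => |v y| * (1 + |y|) ^ (-1 - 2 * σ))
    (x : ℝ) :
    Integrable fun h => |v x - v (x + h)| * |h| ^ (-1 - 2 * σ) := by
  have hvm' : AEStronglyMeasurable fun h => v (x + h) :=
    hvm.comp_measurePreserving (measurePreserving_add_left volume x)
  refine Integrable.mono' (((integrable_min_one_rpow_mul_rpow hσ0 hα).const_mul (M + |v x|)).add
    ((hvL.comp_add_left x).const_mul ((2 + |x|) ^ (1 + 2 * σ))))
    ((aestronglyMeasurable_const.sub hvm').norm.mul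
      (Measurable.pow_const (by fun_prop) _).aestronglyMeasurable)
    (Eventually.of_forall fun h => ?_)
  have hp : 0 ≤ |h| ^ (-1 - 2 * σ) := by positivity
  rw [Real.norm_eq_abs, abs_mul, abs_abs, abs_of_nonneg hp, Pi.add_apply, ← mul_assoc]
  rcases le_total |h| 1 with h1 | h1
  · rw [min_eq_right (Real.rpow_le_one (abs_nonneg h) h1 (by linarith))]
    have := hv x (x + h)
    rw [sub_add_cancel_left, abs_neg] at this
    have h2 : |v x - v (x + h)| ≤ (M + |v x|) * |h| ^ α := this.trans (by
      gcongr
      linarith [abs_nonneg (v x)])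
    have h3 : 0 ≤ (2 + |x|) ^ (1 + 2 * σ) * (|v (x + h)| * (1 + |x + h|) ^ (-1 - 2 * σ)) := by
      positivity
    nlinarith [mul_le_mul_of_nonneg_right h2 hp]
  · rw [min_eq_left (Real.one_le_rpow h1 (by linarith)), mul_one]
    have hh : 0 < |h| := by linarith
    have hle : 1 + |x + h| ≤ (2 + |x|) * |h| := by
      have := abs_add_le x h
      nlinarith [abs_nonneg x]
    have hk : |h| ^ (-1 - 2 * σ) ≤
        (2 + |x|) ^ (1 + 2 * σ) * (1 + |x + h|) ^ (-1 - 2 * σ) := by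
      have h4 := Real.rpow_le_rpow (by positivity) hle (by linarith : 0 ≤ 1 + 2 * σ)
      rw [Real.mul_rpow (by positivity) hh.le] at h4
      rw [show -1 - 2 * σ = -(1 + 2 * σ) by ring, Real.rpow_neg hh.le,
        Real.rpow_neg (by positivity), ← div_eq_mul_inv, le_div_iff₀ (by positivity),
        inv_mul_le_iff₀ (by positivity), mul_comm (|h| ^ _)]
      exact h4
    calc |v x - v (x + h)| * |h| ^ (-1 - 2 * σ)
        ≤ (|v x| + |v (x + h)|) * |h| ^ (-1 - 2 * σ) := by
          gcongr
          exact abs_sub _ _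
      _ = |v x| * |h| ^ (-1 - 2 * σ) + |v (x + h)| * |h| ^ (-1 - 2 * σ) := by ring
      _ ≤ (M + |v x|) * |h| ^ (-1 - 2 * σ) + |v (x + h)| *
          ((2 + |x|) ^ (1 + 2 * σ) * (1 + |x + h|) ^ (-1 - 2 * σ)) := by
          gcongr
          linarith
      _ = _ := by ring

lemma integrableOn_abs_sub_mul_rpow {σ α : ℝ} {u : ℝ → ℝ} (hσ0 : 0 < σ) (hα : 2 * σ < α)
    (hu : MemHolderPlus α u)
    (huL : IntegrableOn (fun y => |u y| / (1 + y) ^ (1 + 2 * σ)) (Ioi 0)) {x : ℝ} (hx : 0 < x) :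
    IntegrableOn (fun y => |u x - u y| * |x - y| ^ (-1 - 2 * σ)) (Ioi 0) := by
  obtain ⟨M, hM, hv⟩ := hu.exists_holder_indicator (by linarith)
  have h := (integrable_abs_sub_mul_rpow hσ0 hα hM hv
    ((aestronglyMeasurable_indicator_iff measurableSet_Ioi).2
      (hu.1.aestronglyMeasurable measurableSet_Ioi))
    (integrable_indicator_mul_one_add_abs_rpow huL) x).comp_sub_right x
  refine h.integrableOn.congr_fun (fun y hy => ?_) measurableSet_Ioi
  simp only
  rw [indicator_of_mem (mem_Ioi.2 hx), add_sub_cancel, indicator_of_mem hy, abs_sub_comm y x]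

/-- Absolute convergence of the double integral in `(y, t)`. -/
lemma integrable_sub_mul_besselHeatKernel_mul_rpow {lam σ α : ℝ} {u : ℝ → ℝ} (hlam : 1 ≤ lam)
    (hσ0 : 0 < σ) (hα : 2 * σ < α) (hu : MemHolderPlus α u)
    (huL : IntegrableOn (fun y => |u y| / (1 + y) ^ (1 + 2 * σ)) (Ioi 0)) {x : ℝ} (hx : 0 < x) :
    Integrable (fun p : ℝ × ℝ => (u x - u p.1) * (besselHeatKernel lam p.2 x p.1 * p.2 ^ (-1 - σ)))
      ((volume.restrict (Ioi 0)).prod (volume.restrict (Ioi 0))) := by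
  have hum : AEStronglyMeasurable u (volume.restrict (Ioi 0)) :=
    hu.1.aestronglyMeasurable measurableSet_Ioi
  have hmeas : AEStronglyMeasurable
      (fun p : ℝ × ℝ => (u x - u p.1) * (besselHeatKernel lam p.2 x p.1 * p.2 ^ (-1 - σ)))
      ((volume.restrict (Ioi 0)).prod (volume.restrict (Ioi 0))) :=
    (aestronglyMeasurable_const.sub hum.comp_fst).mul
      ((aestronglyMeasurable_besselHeatKernel_prod hlam hx).mul
        (Measurable.pow_const measurable_snd _).aestronglyMeasurable)
  have hne : ∀ᵐ y ∂(volume.restrict (Ioi (0 : ℝ))), x ≠ y :=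
    ae_restrict_of_ae ((measure_eq_zero_iff_ae_notMem.1 (measure_singleton x)).mono
      fun y hy h => hy h.symm)
  have hpos : ∀ᵐ y ∂(volume.restrict (Ioi (0 : ℝ))), 0 < y := ae_restrict_mem measurableSet_Ioi
  obtain ⟨C, hC, hb⟩ := exists_integral_abs_besselHeatKernel_mul_rpow_le (σ := σ) hlam
    (by linarith)
  rw [integrable_prod_iff hmeas]
  refine ⟨?_, ?_⟩
  · filter_upwards [hne, hpos] with y hy hy0
    exact (integrableOn_besselHeatKernel_mul_rpow hlam (by linarith) hx hy0 hy).const_mul _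
  · refine Integrable.mono' ((integrableOn_abs_sub_mul_rpow hσ0 hα hu huL hx).const_mul C)
      hmeas.norm.integral_prod_right' ?_
    filter_upwards [hne, hpos] with y hy hy0
    rw [Real.norm_of_nonneg (integral_nonneg fun _ => norm_nonneg _)]
    simp only [norm_mul (u x - u y)]
    rw [integral_const_mul, Real.norm_eq_abs]
    calc _ ≤ |u x - u y| * (C * |x - y| ^ (-1 - 2 * σ)) := by
          gcongr
          exact hb x y hx hy0 hy
      _ = _ := by ring

lemma integrableOn_sub_mul_fracKernelK {lam σ α : ℝ} {u : ℝ → ℝ} (hlam : 1 ≤ lam)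
    (hσ0 : 0 < σ) (hα : 2 * σ < α) (hu : MemHolderPlus α u)
    (huL : IntegrableOn (fun y => |u y| / (1 + y) ^ (1 + 2 * σ)) (Ioi 0)) {x : ℝ} (hx : 0 < x) :
    IntegrableOn (fun y => (u x - u y) * fracKernelK lam σ x y) (Ioi 0) := by
  refine ((integrable_sub_mul_besselHeatKernel_mul_rpow hlam hσ0 hα hu huL
    hx).integral_prod_left.const_mul (1 / (-gammaNeg σ))).congr (Eventually.of_forall fun y => ?_)
  simp only [fracKernelK, integral_const_mul]
  ring

/-- Splitting of `W_t^λ u(x) - u(x)` into a difference part and a multiple of `W_t^λ 1(x) - 1`. -/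
lemma heatSemigroup_sub_mul_rpow_ae_eq {lam σ α : ℝ} {u : ℝ → ℝ} (hlam : 1 ≤ lam)
    (hσ0 : 0 < σ) (hα : 2 * σ < α) (hu : MemHolderPlus α u)
    (huL : IntegrableOn (fun y => |u y| / (1 + y) ^ (1 + 2 * σ)) (Ioi 0)) {x : ℝ} (hx : 0 < x) :
    (fun t => (heatSemigroup lam u t x - u x) * t ^ (-1 - σ)) =ᵐ[volume.restrict (Ioi 0)]
      fun t => u x * ((heatOne lam t x - 1) * t ^ (-1 - σ)) -
        ∫ y in Ioi (0 : ℝ), (u x - u y) * (besselHeatKernel lam t x y * t ^ (-1 - σ)) := by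
  filter_upwards [ae_restrict_mem measurableSet_Ioi,
    (integrable_sub_mul_besselHeatKernel_mul_rpow hlam hσ0 hα hu huL hx).prod_left_ae]
    with t ht hi
  have ht0 : (0 : ℝ) < t := ht
  have hp : t ^ (-1 - σ) ≠ 0 := (Real.rpow_pos_of_pos ht0 _).ne'
  have hW := integrableOn_besselHeatKernel hlam ht0 hx
  have hd : IntegrableOn (fun y => (u x - u y) * besselHeatKernel lam t x y) (Ioi 0) := by
    refine (Integrable.mul_const hi (t ^ (-1 - σ))⁻¹).congr (Eventually.of_forall fun y => ?_)
    simp only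
    field_simp
  have he : heatSemigroup lam u t x = u x * heatOne lam t x -
      ∫ y in Ioi (0 : ℝ), (u x - u y) * besselHeatKernel lam t x y := by
    rw [heatSemigroup, heatOne, ← integral_const_mul, ← integral_sub (hW.const_mul _) hd]
    congr 1
    ext y
    ring
  simp only [← mul_assoc]
  rw [integral_mul_const, he]
  ring

lemma continuousAt_integral_sub_mul_fracKernelK {lam σ α : ℝ} {u : ℝ → ℝ} (hlam : 1 ≤ lam)
    (hσ0 : 0 < σ) (hα : 2 * σ < α) (hu : MemHolderPlus α u)
    (huL : IntegrableOn (fun y => |u y| / (1 + y) ^ (1 + 2 * σ)) (Ioi 0)) {x : ℝ} (hx : 0 < x) :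
    ContinuousAt (fun x => ∫ y in Ioi (0 : ℝ), (u x - u y) * fracKernelK lam σ x y) x := by
  obtain ⟨M, hM, hv⟩ := hu.exists_holder_indicator (by linarith)
  obtain ⟨C, hC, hK⟩ := exists_abs_fracKernelK_le (σ := σ) hlam (by linarith)
  set v := (Ioi 0).indicator u with hvdef
  have hvpos : ∀ y, 0 < y → v y = u y := fun y hy => indicator_of_mem (mem_Ioi.2 hy) u
  let F : ℝ → ℝ → ℝ := fun x' h =>
    (Ioi 0).indicator (fun y => (u x' - u y) * fracKernelK lam σ x' y) (x' + h)
  have hFint : ∀ x', 0 < x' → Integrable (F x') := fun x' hx' =>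
    ((integrableOn_sub_mul_fracKernelK hlam hσ0 hα hu huL hx').integrable_indicator
      measurableSet_Ioi).comp_add_left x'
  have hF : (fun x' => ∫ y in Ioi (0 : ℝ), (u x' - u y) * fracKernelK lam σ x' y) =
      fun x' => ∫ h, F x' h := by
    ext x'
    rw [← integral_indicator measurableSet_Ioi]
    exact (integral_add_left_eq_self _ x').symm
  rw [hF]
  have hvint := integrable_abs_sub_mul_rpow hσ0 hα hM hv
    ((aestronglyMeasurable_indicator_iff measurableSet_Ioi).2
      (hu.1.aestronglyMeasurable measurableSet_Ioi))
    (integrable_indicator_mul_one_add_abs_rpow huL) x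
  have hdiff : ∀ x' h, |x' - x| < 1 →
      |v x' - v (x' + h)| ≤ 2 * M * min 1 (|h| ^ α) + |v x - v (x + h)| := by
    intro x' h hd
    have hmin : 0 ≤ min 1 (|h| ^ α) := le_min zero_le_one (by positivity)
    rcases le_total |h| 1 with h1 | h1
    · rw [min_eq_right (Real.rpow_le_one (abs_nonneg h) h1 (by linarith))] at hmin ⊢
      have := hv x' (x' + h)
      rw [sub_add_cancel_left, abs_neg] at this
      nlinarith [abs_nonneg (v x - v (x + h)), mul_nonneg hM hmin]
    · rw [min_eq_left (Real.one_le_rpow h1 (by linarith))]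
      have hd1 : |x' - x| ^ α ≤ 1 := Real.rpow_le_one (abs_nonneg _) hd.le (by linarith)
      have e1 : |v x' - v x| ≤ M := (hv x' x).trans (mul_le_of_le_one_right hM hd1)
      have e2 : |v (x + h) - v (x' + h)| ≤ M := by
        refine (hv _ _).trans (mul_le_of_le_one_right hM ?_)
        rwa [add_sub_add_right_eq_sub, abs_sub_comm]
      have e3 := abs_add_three (v x' - v x) (v x - v (x + h)) (v (x + h) - v (x' + h))
      rw [show v x' - v x + (v x - v (x + h)) + (v (x + h) - v (x' + h)) = v x' - v (x' + h) by
        ring] at e3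
      linarith
  refine continuousAt_of_dominated (bound := fun h => C * (2 * M *
    (min 1 (|h| ^ α) * |h| ^ (-1 - 2 * σ)) + |v x - v (x + h)| * |h| ^ (-1 - 2 * σ))) ?_ ?_
    ((((integrable_min_one_rpow_mul_rpow hσ0 hα).const_mul _).add hvint).const_mul C) ?_
  · filter_upwards [eventually_gt_nhds hx] with x' hx'
    exact (hFint x' hx').aestronglyMeasurable
  · filter_upwards [eventually_gt_nhds hx, Metric.ball_mem_nhds x one_pos] with x' hx' hd
    rw [Metric.mem_ball, Real.dist_eq] at hd
    filter_upwards [measure_eq_zero_iff_ae_notMem.1 (measure_singleton (0 : ℝ))] with h hh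
    have hmin : 0 ≤ min 1 (|h| ^ α) := le_min zero_le_one (by positivity)
    by_cases hy : 0 < x' + h
    · have e : F x' h = (v x' - v (x' + h)) * fracKernelK lam σ x' (x' + h) := by
        simp only [F]
        rw [indicator_of_mem (mem_Ioi.2 hy), hvpos _ hx', hvpos _ hy]
      have hk := hK x' (x' + h) hx' hy (by simpa using hh)
      rw [sub_add_cancel_left, abs_neg] at hk
      rw [e, Real.norm_eq_abs, abs_mul]
      calc _ ≤ (2 * M * min 1 (|h| ^ α) + |v x - v (x + h)|) * (C * |h| ^ (-1 - 2 * σ)) :=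
            mul_le_mul (hdiff x' h hd) hk (abs_nonneg _) (by positivity)
        _ = _ := by ring
    · have e : F x' h = 0 := indicator_of_notMem (by simpa using hy) _
      rw [e, norm_zero]
      positivity
  · filter_upwards [measure_eq_zero_iff_ae_notMem.1 (measure_singleton (0 : ℝ)),
      measure_eq_zero_iff_ae_notMem.1 (measure_singleton (-x))] with h hh hhx
    have hcadd : ContinuousAt (fun x' : ℝ => x' + h) x := by fun_prop
    rcases lt_trichotomy 0 (x + h) with hy | hy | hy
    · have hev : (fun x' => F x' h) =ᶠ[nhds x]
          fun x' => (u x' - u (x' + h)) * fracKernelK lam σ x' (x' + h) := by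
        filter_upwards [hcadd.eventually (eventually_gt_nhds hy)] with x' hy'
        exact indicator_of_mem (mem_Ioi.2 hy') _
      refine ContinuousAt.congr ?_ hev.symm
      have hcu : ∀ y, 0 < y → ContinuousAt u y := fun y hy0 =>
        hu.1.continuousAt (Ioi_mem_nhds hy0)
      exact ((hcu x hx).sub (ContinuousAt.comp (f := fun x' => x' + h) (hcu _ hy) hcadd)).mul
        (continuousAt_fracKernelK_add hlam (by linarith) hx hy hh)
    · exact absurd (by linarith : h = -x) hhx
    · have hev : (fun x' => F x' h) =ᶠ[nhds x] fun _ => 0 := by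
        filter_upwards [hcadd.eventually (eventually_lt_nhds hy)] with x' hy'
        exact indicator_of_notMem (notMem_Ioi.2 (le_of_lt hy')) _
      exact continuousAt_const.congr hev.symm

/-- Pointwise formula for `Δ_λ^σ u` when `0 < σ < 1/2`. -/
theorem pointwise_formula_small_sigma
    (lam σ α : ℝ) (hlam : 1 ≤ lam) (hσ0 : 0 < σ) (hσ1 : σ < 1 / 2)
    (hα : 2 * σ < α) (hα1 : α ≤ 1)
    (u : ℝ → ℝ) (hu : MemHolderPlus α u)
    (huL : IntegrableOn (fun y => |u y| / (1 + y) ^ (1 + 2 * σ)) (Set.Ioi 0)) :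
    (∀ x : ℝ, 0 < x →
      IntegrableOn (fun y => (u x - u y) * fracKernelK lam σ x y) (Set.Ioi 0) ∧
      IntegrableOn (fun t => (heatSemigroup lam u t x - u x) * t ^ (-1 - σ)) (Set.Ioi 0) ∧
      1 / gammaNeg σ *
          (∫ t in Set.Ioi (0 : ℝ), (heatSemigroup lam u t x - u x) * t ^ (-1 - σ)) =
        (∫ y in Set.Ioi (0 : ℝ), (u x - u y) * fracKernelK lam σ x y) +
          u x * fracFunB lam σ x) ∧
    ContinuousOn
      (fun x => (∫ y in Set.Ioi (0 : ℝ), (u x - u y) * fracKernelK lam σ x y) +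
        u x * fracFunB lam σ x) (Set.Ioi 0) := by
  refine ⟨fun x hx => ?_, fun x hx => ?_⟩
  · have hΦ := integrable_sub_mul_besselHeatKernel_mul_rpow hlam hσ0 hα hu huL hx
    have hae := heatSemigroup_sub_mul_rpow_ae_eq hlam hσ0 hα hu huL hx
    have hB := (integrableOn_heatOne_sub_one_mul_rpow hlam hσ0 hσ1 hx).const_mul (u x)
    refine ⟨integrableOn_sub_mul_fracKernelK hlam hσ0 hα hu huL hx,
      (hB.sub hΦ.integral_prod_right).congr hae.symm, ?_⟩
    have hswap := integral_integral_swap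
      (f := fun y t => (u x - u y) * (besselHeatKernel lam t x y * t ^ (-1 - σ))) hΦ
    rw [integral_congr_ae hae, integral_sub hB hΦ.integral_prod_right, ← hswap,
      integral_const_mul, fracFunB]
    simp only [fracKernelK, integral_const_mul, mul_left_comm _ (1 / -gammaNeg σ)]
    rw [one_div_neg_eq_neg_one_div]
    ring
  · exact ((continuousAt_integral_sub_mul_fracKernelK hlam hσ0 hα hu huL hx).add
      ((hu.1.continuousAt (Ioi_mem_nhds hx)).mul
        (continuousAt_fracFunB hlam hσ0 hσ1 hx))).continuousWithinAt
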